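/- Let F, G ∈ ℝ with F > 1, G > 1, F² ≥ G, and G² ≥ F. Define C₀ : ℝ → ℝ by C₀(s) = ∫ ν, (Real.log ((1 + F⁻¹·Real.exp (−s² + √2·s·ν)) / (1 + G·Real.exp (−s² + √2·s·ν))) + F⁻¹·Real.log ((1 + F·Real.exp (−s² − √2·s·ν)) / (1 + G⁻¹·Real.exp (−s² − √2·s·ν)))) ∂(gaussianReal 0 1). Then C₀ is strictly increasing on (0, ∞). -/

import Mathlib

open MeasureTheory ProbabilityTheory

/-- The channel penalty term under `H₀` for an AWGN channel, as a function of the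
normalized signaling separation `s`, where `F = (1-α)/α` and `G = (1-β)/β`. -/
noncomputable def awgnPenaltyH0 (F G : ℝ) (s : ℝ) : ℝ :=
  ∫ ν, (Real.log ((1 + F⁻¹ * Real.exp (-s^2 + Real.sqrt 2 * s * ν)) /
          (1 + G * Real.exp (-s^2 + Real.sqrt 2 * s * ν)))
      + F⁻¹ * Real.log ((1 + F * Real.exp (-s^2 - Real.sqrt 2 * s * ν)) /
          (1 + G⁻¹ * Real.exp (-s^2 - Real.sqrt 2 * s * ν)))) ∂(gaussianReal 0 1)

open scoped NNReal

lemma integral_lt_integral_of_ae_lt {α : Type*} [MeasurableSpace α] {μ : Measure α} [NeZero μ]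
    {f g : α → ℝ} (hf : Integrable f μ) (hg : Integrable g μ) (h : ∀ᵐ x ∂μ, f x < g x) :
    ∫ x, f x ∂μ < ∫ x, g x ∂μ := by
  have hle : f ≤ᵐ[μ] g := h.mono fun _ hx ↦ hx.le
  refine lt_of_le_of_ne (integral_mono_ae hf hg hle) fun heq ↦ ?_
  have hfg := (integral_eq_iff_of_ae_le hf hg hle).1 heq
  obtain ⟨x, hlt, heq⟩ := (h.and hfg).exists
  exact hlt.ne heq

/-- The integrand of the Kullback-Leibler divergence between the mixtures with (unnormalized)
weights `(F, 1)` and `(1, G)`, as a function of the likelihood ratio `l` of their components. -/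
noncomputable def mixtureDivergence (F G l : ℝ) : ℝ :=
  (F + l) * Real.log ((F + l) / (1 + G * l))

/-- The log-ratio of the two mixtures is bounded for nonnegative likelihood ratios. -/
lemma abs_log_mixture_ratio_le {F G l : ℝ} (hF : 1 < F) (hG : 1 < G) (hl : 0 ≤ l) :
    |Real.log ((F + l) / (1 + G * l))| ≤ Real.log (F * G) := by
  have hGl : 0 ≤ G * l := by positivity
  have hFG : 0 < F * G := by positivity
  have hpos : 0 < (F + l) / (1 + G * l) := by positivity
  have h1 : 0 < F - 1 := by linarith
  have h2 : 0 < G - 1 := by linarith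
  rw [abs_le, ← Real.log_inv]
  constructor
  · apply Real.log_le_log (by positivity)
    rw [inv_eq_one_div, div_le_div_iff₀ hFG (by positivity)]
    nlinarith [mul_pos h1 h2, mul_nonneg hGl h1.le, mul_pos hFG h1]
  · apply Real.log_le_log hpos
    rw [div_le_iff₀ (by positivity)]
    nlinarith [mul_pos h1 h2, mul_nonneg hGl h1.le, mul_nonneg hGl hFG.le,
      mul_nonneg hl h1.le, mul_nonneg hl h2.le, mul_nonneg hl (mul_pos h1 h2).le]

/-- `mixtureDivergence F G` lies strictly above its tangent line at `l`. -/
lemma tangent_lt_mixtureDivergence {F G l t : ℝ} (hF : 1 < F) (hG : 1 < G)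
    (hl : 0 < l) (ht : 0 < t) (hne : t ≠ l) :
    (F + t) * Real.log ((F + l) / (1 + G * l)) + (F + t)
        - (1 + G * t) * ((F + l) / (1 + G * l)) < mixtureDivergence F G t := by
  have hu : 0 < F + t := by linarith
  have hv : 0 < 1 + G * t := by positivity
  have hu' : 0 < F + l := by linarith
  have hv' : 0 < 1 + G * l := by positivity
  set z := ((F + l) / (1 + G * l)) / ((F + t) / (1 + G * t)) with hz
  have hz0 : 0 < z := by positivity
  have hz1 : z ≠ 1 := by
    intro h
    rw [hz, div_eq_one_iff_eq (by positivity), div_eq_div_iff hv'.ne' hv.ne'] at h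
    have h' : (F * G - 1) * (t - l) = 0 := by linear_combination h
    rcases mul_eq_zero.1 h' with h' | h'
    · nlinarith
    · exact hne (sub_eq_zero.1 h')
  have key := mul_lt_mul_of_pos_left (Real.log_lt_sub_one_of_pos hz0 hz1) hu
  have hlog : Real.log z =
      Real.log ((F + l) / (1 + G * l)) - Real.log ((F + t) / (1 + G * t)) :=
    Real.log_div (by positivity) (by positivity)
  have hmul : (F + t) * z = (1 + G * t) * ((F + l) / (1 + G * l)) := by
    rw [hz]; field_simp
  rw [hlog] at key
  unfold mixtureDivergence
  linarith

lemma integrable_exp_sub_gaussianReal (v : ℝ≥0) (c : ℝ) :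
    Integrable (fun x ↦ Real.exp (x - c)) (gaussianReal 0 v) := by
  simpa [Real.exp_sub] using
    (integrable_exp_mul_gaussianReal (μ := 0) (v := v) 1).div_const (Real.exp c)

lemma integral_exp_sub_half_gaussianReal (v : ℝ≥0) :
    ∫ x, Real.exp (x - v / 2) ∂(gaussianReal 0 v) = 1 := by
  have h := congrFun (mgf_fun_id_gaussianReal (μ := 0) (v := v)) 1
  simp only [mgf, one_mul, zero_add, one_pow, mul_one] at h
  simp [Real.exp_sub, integral_div, h]

/-- Exponential change of measure for a centered Gaussian. -/
lemma integral_add_var_gaussianReal {v : ℝ≥0} (hv : v ≠ 0) (g : ℝ → ℝ) :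
    ∫ x, g (x + v) ∂(gaussianReal 0 v)
      = ∫ x, Real.exp (x - v / 2) * g x ∂(gaussianReal 0 v) := by
  have hv' : (v : ℝ) ≠ 0 := by exact_mod_cast hv
  have hmap := gaussianReal_map_add_const (μ := 0) (v := v) (v : ℝ)
  rw [← (measurableEmbedding_addRight (v : ℝ)).integral_map, hmap, zero_add,
    integral_gaussianReal_eq_integral_smul hv, integral_gaussianReal_eq_integral_smul hv]
  congr 1 with x
  simp only [gaussianPDFReal, smul_eq_mul]
  rw [← mul_assoc, mul_assoc _ (Real.exp _) (Real.exp _), ← Real.exp_add]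
  congr 3
  field_simp
  ring

lemma integrable_mixtureDivergence {F G : ℝ} (hF : 1 < F) (hG : 1 < G) (v : ℝ≥0) (c : ℝ) :
    Integrable (fun x ↦ mixtureDivergence F G (Real.exp (x - c))) (gaussianReal 0 v) := by
  refine ((integrable_const F).add (integrable_exp_sub_gaussianReal v c)).mul_bdd
    (c := Real.log (F * G)) ?_ ?_
  · exact Measurable.aestronglyMeasurable (by fun_prop)
  · exact ae_of_all _ fun x ↦ abs_log_mixture_ratio_le hF hG (Real.exp_pos _).le

/-- Strict Jensen inequality for `mixtureDivergence` and a log-normal variable of mean one. -/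
lemma mixtureDivergence_lt_integral {F G : ℝ} (hF : 1 < F) (hG : 1 < G) {w : ℝ≥0}
    (hw : w ≠ 0) (c : ℝ) :
    mixtureDivergence F G (Real.exp c)
      < ∫ y, mixtureDivergence F G (Real.exp (c + (y - w / 2))) ∂(gaussianReal 0 w) := by
  set h := Real.log ((F + Real.exp c) / (1 + G * Real.exp c)) with hh
  set r := (F + Real.exp c) / (1 + G * Real.exp c) with hr
  have hv : 1 + G * Real.exp c ≠ 0 := by positivity
  have hint := integrable_exp_sub_gaussianReal w (w / 2)
  let A : ℝ → ℝ := fun y ↦ (F * h + F - r) + (Real.exp c * (h + 1 - G * r)) * Real.exp (y - w / 2)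
  have hA : Integrable A (gaussianReal 0 w) := (integrable_const _).add (hint.const_mul _)
  have hΦ : Integrable (fun y ↦ mixtureDivergence F G (Real.exp (c + (y - w / 2))))
      (gaussianReal 0 w) := by
    convert integrable_mixtureDivergence hF hG w (w / 2 - c) using 4
    ring
  have hAint : ∫ y, A y ∂(gaussianReal 0 w) = mixtureDivergence F G (Real.exp c) := by
    simp only [A]
    rw [integral_add (integrable_const _) (hint.const_mul _), integral_const_mul,
      integral_exp_sub_half_gaussianReal]
    have : r * (1 + G * Real.exp c) = F + Real.exp c := div_mul_cancel₀ _ hv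
    simp only [integral_const, probReal_univ, one_smul, mixtureDivergence, ← hh, ← hr]
    linear_combination -this
  have hlt : ∀ y : ℝ, y ≠ w / 2 → A y < mixtureDivergence F G (Real.exp (c + (y - w / 2))) := by
    intro y hy
    have hne : Real.exp (c + (y - w / 2)) ≠ Real.exp c := by
      intro he
      exact hy (by linarith [Real.exp_injective he])
    have := tangent_lt_mixtureDivergence hF hG (Real.exp_pos c) (Real.exp_pos _) hne
    refine lt_of_eq_of_lt ?_ this
    simp only [A, Real.exp_add c, ← hr, ← hh]
    ring
  have := nullSingletonClass_gaussianReal (μ := 0) hw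
  have hae : ∀ᵐ y ∂(gaussianReal 0 w), y ≠ (w : ℝ) / 2 := by
    simp [ae_iff]
  rw [← hAint]
  exact integral_lt_integral_of_ae_lt hA hΦ (hae.mono hlt)

/-- The expected `mixtureDivergence` strictly increases with the variance. -/
lemma integral_mixtureDivergence_lt {F G : ℝ} (hF : 1 < F) (hG : 1 < G) (v : ℝ≥0) {w : ℝ≥0}
    (hw : w ≠ 0) :
    ∫ x, mixtureDivergence F G (Real.exp (x - v / 2)) ∂(gaussianReal 0 v)
      < ∫ x, mixtureDivergence F G (Real.exp (x - (v + w : ℝ≥0) / 2))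
          ∂(gaussianReal 0 (v + w)) := by
  have hconv := gaussianReal_conv_gaussianReal (m₁ := 0) (m₂ := 0) (v₁ := v) (v₂ := w)
  rw [add_zero] at hconv
  have hint := integrable_mixtureDivergence hF hG (v + w) ((v + w : ℝ≥0) / 2)
  rw [← hconv] at hint ⊢
  rw [integral_conv hint]
  have hprod := ((integrable_map_measure hint.aestronglyMeasurable (by fun_prop)).1
    hint).integral_prod_left
  refine integral_lt_integral_of_ae_lt (integrable_mixtureDivergence hF hG v _) hprod
    (ae_of_all _ fun x ↦ ?_)
  convert mixtureDivergence_lt_integral hF hG hw (x - v / 2) using 6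
  push_cast
  ring

/-- The channel penalty is, up to an affine change, the expected `mixtureDivergence`. -/
lemma awgnPenaltyH0_eq {F G s : ℝ} (hF : 1 < F) (hG : 1 < G) (hs : 0 < s) {v : ℝ≥0}
    (hv : (v : ℝ) = 2 * s ^ 2) :
    awgnPenaltyH0 F G s =
      F⁻¹ * ∫ x, mixtureDivergence F G (Real.exp (x - v / 2)) ∂(gaussianReal 0 v)
        + (F⁻¹ * Real.log G - Real.log F) := by
  have hF0 : 0 < F := by linarith
  have hG0 : 0 < G := by linarith
  have hv0 : v ≠ 0 := by
    rintro rfl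
    simp [hs.ne'] at hv
  let h : ℝ → ℝ := fun x ↦
    Real.log ((F + Real.exp (x - v / 2)) / (1 + G * Real.exp (x - v / 2)))
  let g : ℝ → ℝ := fun x ↦ (h x + F⁻¹ * h (x + v)) + (F⁻¹ * Real.log G - Real.log F)
  have hmeas : Measurable h := by fun_prop
  have hgmeas : Measurable g := by fun_prop
  have hbdd : ∀ x, ‖h x‖ ≤ Real.log (F * G) := fun x ↦
    abs_log_mixture_ratio_le hF hG (Real.exp_pos _).le
  have hint : Integrable h (gaussianReal 0 v) :=
    .of_bound hmeas.aestronglyMeasurable _ (ae_of_all _ hbdd)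
  have hshift : Integrable (fun x ↦ h (x + v)) (gaussianReal 0 v) :=
    .of_bound (hmeas.comp (measurable_add_const _)).aestronglyMeasurable _
      (ae_of_all _ fun x ↦ hbdd _)
  have htilt : Integrable (fun x ↦ Real.exp (x - v / 2) * h x) (gaussianReal 0 v) :=
    (integrable_exp_sub_gaussianReal v _).mul_bdd hmeas.aestronglyMeasurable (ae_of_all _ hbdd)
  have hmap : (gaussianReal 0 1).map (fun x ↦ Real.sqrt 2 * s * x) = gaussianReal 0 v := by
    rw [gaussianReal_map_const_mul, mul_zero, mul_one]
    congr 1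
    ext
    simp [hv, mul_pow]
  have hrew : ∀ ν, Real.log ((1 + F⁻¹ * Real.exp (-s^2 + Real.sqrt 2 * s * ν)) /
          (1 + G * Real.exp (-s^2 + Real.sqrt 2 * s * ν)))
      + F⁻¹ * Real.log ((1 + F * Real.exp (-s^2 - Real.sqrt 2 * s * ν)) /
          (1 + G⁻¹ * Real.exp (-s^2 - Real.sqrt 2 * s * ν)))
      = g (Real.sqrt 2 * s * ν) := by
    intro ν
    have h1 : Real.sqrt 2 * s * ν - v / 2 = -s^2 + Real.sqrt 2 * s * ν := by rw [hv]; ring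
    have h2 : Real.sqrt 2 * s * ν + v - v / 2 = -(-s^2 - Real.sqrt 2 * s * ν) := by
      rw [hv]; ring
    simp only [g, h, h1, h2, Real.exp_neg (-s^2 - Real.sqrt 2 * s * ν)]
    have hp := Real.exp_pos (-s^2 + Real.sqrt 2 * s * ν)
    have hq := Real.exp_pos (-s^2 - Real.sqrt 2 * s * ν)
    generalize Real.exp (-s^2 + Real.sqrt 2 * s * ν) = p at *
    generalize Real.exp (-s^2 - Real.sqrt 2 * s * ν) = q at *
    have e1 : (1 + F⁻¹ * p) / (1 + G * p) = ((F + p) / (1 + G * p)) / F := by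
      field_simp
    have e2 : (1 + F * q) / (1 + G⁻¹ * q) = ((F + q⁻¹) / (1 + G * q⁻¹)) * G := by
      field_simp
      ring
    rw [e1, e2, Real.log_div (by positivity) hF0.ne', Real.log_mul (by positivity) hG0.ne']
    ring
  have hΦ : ∀ x, mixtureDivergence F G (Real.exp (x - v / 2))
      = F * h x + Real.exp (x - v / 2) * h x := fun x ↦ add_mul _ _ _
  unfold awgnPenaltyH0
  rw [integral_congr_ae (ae_of_all _ hrew), integral_congr_ae (ae_of_all _ hΦ),
    ← integral_map (φ := fun x ↦ Real.sqrt 2 * s * x) (f := g) (by fun_prop)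
      hgmeas.aestronglyMeasurable, hmap,
    integral_add (f := fun x ↦ h x + F⁻¹ * h (x + v)) (hint.add (hshift.const_mul _))
      (integrable_const _),
    integral_add hint (hshift.const_mul _), integral_const_mul,
    integral_add_var_gaussianReal hv0, integral_add (hint.const_mul _) htilt,
    integral_const_mul]
  simp only [integral_const, probReal_univ, one_smul]
  rw [mul_add, inv_mul_cancel_left₀ (ne_of_gt hF0)]

/-- Lemma 2 of the paper, `H₀` case: if `F, G > 1`, `F² ≥ G` and `G² ≥ F`, then the AWGN
channel penalty term `C₀` is strictly increasing in the signaling separation `s > 0`. -/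
theorem awgnPenaltyH0_strictMonoOn (F G : ℝ) (hF : 1 < F) (hG : 1 < G)
    (hF2G : G ≤ F^2) (hG2F : F ≤ G^2) :
    StrictMonoOn (awgnPenaltyH0 F G) (Set.Ioi (0 : ℝ)) := by
  intro s hs t ht hst
  rw [Set.mem_Ioi] at hs ht
  have hw : 0 < 2 * t ^ 2 - 2 * s ^ 2 := by nlinarith
  lift 2 * t ^ 2 - 2 * s ^ 2 to ℝ≥0 using hw.le with w hwt
  have hv : 0 ≤ 2 * s ^ 2 := by positivity
  lift 2 * s ^ 2 to ℝ≥0 using hv with v hvs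
  rw [awgnPenaltyH0_eq hF hG hs hvs,
    awgnPenaltyH0_eq hF hG ht (v := v + w) (by push_cast; linarith)]
  have hw0 : w ≠ 0 := by
    rintro rfl
    exact lt_irrefl _ hw
  gcongr
  exact integral_mixtureDivergence_lt hF hG v hw0
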